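/- The map ρ is a well-defined retraction onto H: for every (d,e) ∈ H₀M X, ρ(d,e) lies in H X, and ρ restricted to H X is the identity, i.e. ρ(d,e) = (d,e) for every (d,e) ∈ H X. -/

import Mathlib

open scoped ENNReal NNReal
open Classical

universe u v w

/-- Raw trajectories: a duration in `ℝ≥0∞` and a partial evolution `ℝ≥0 → Option X`. -/
abbrev Traj (X : Type u) := ℝ≥0∞ × (ℝ≥0 → Option X)

/-- The flattening condition: if the duration is finite, the evolution is constant
from the duration onwards.  Membership in `H₀M X` means exactly `Flat`. -/
def Flat {X : Type u} (p : Traj X) : Prop :=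
  ∀ t : ℝ≥0, p.1 ≤ (t : ℝ≥0∞) → p.2 t = p.2 p.1.toNNReal

/-- The unit of `H₀M`. -/
def eta {X : Type u} (x : X) : Traj X := (0, fun _ => some x)

/-- The Kleisli lifting `f^†` of the monad `H₀M`. -/
noncomputable def kl {X : Type u} {Y : Type v} (f : X → Traj Y) (p : Traj X) : Traj Y :=
  if p.1 = ⊤ then (p.1, fun t => (p.2 t).bind fun x' => (f x').2 0)
  else
    match p.2 p.1.toNNReal with
    | none => (p.1, fun t => (p.2 t).bind fun x' => (f x').2 0)
    | some x =>
        (p.1 + (f x).1,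
          fun t =>
            if (t : ℝ≥0∞) < p.1 then (p.2 t).bind fun x' => (f x').2 0
            else (f x).2 (t - p.1.toNNReal))

/-- Membership in `H₊ X ⊆ H₀M X`: the evolution is not everywhere `none`, and it is
defined at every time instant strictly below the duration. -/
def memHp {X : Type u} (p : Traj X) : Prop :=
  p.2 ≠ (fun _ => none) ∧ ∀ t : ℝ≥0, (t : ℝ≥0∞) < p.1 → p.2 t ≠ none

/-- Membership in `H X ⊆ H₀M X`: either the evolution is total, or the duration is `∞`
and the domain of the evolution is downward closed. -/
def memH {X : Type u} (p : Traj X) : Prop :=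
  (∀ t, p.2 t ≠ none) ∨
    (p.1 = ⊤ ∧ ∀ s t : ℝ≥0, s ≤ t → p.2 t ≠ none → p.2 s ≠ none)

/-- The approximation order `⊑` on `H₀M X`. -/
def TrajLE {X : Type u} (p q : Traj X) : Prop :=
  p.1 ≤ q.1 ∧ (∀ t, p.2 t ≠ none → q.2 t = p.2 t) ∧
    (p.1 ≠ ⊤ → p.2 p.1.toNNReal ≠ none → p.1 = q.1)

/-- Join of an ω-chain in `H₀M X`: the duration is the supremum of the durations, and
the evolution at `t` is the common value `(c i).2 t` whenever it is `≠ none` for some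
`i`, and `none` otherwise. -/
noncomputable def chainJoin {X : Type u} (c : ℕ → Traj X) : Traj X :=
  (⨆ i, (c i).1,
    fun t => if h : ∃ i, (c i).2 t ≠ none then (c h.choose).2 t else none)

/-- `d⋆ = sup { s < d ∣ e is defined on [0, s) }`. -/
noncomputable def dstar {X : Type u} (p : Traj X) : ℝ≥0∞ :=
  sSup {s : ℝ≥0∞ | s < p.1 ∧ ∀ t : ℝ≥0, (t : ℝ≥0∞) < s → p.2 t ≠ none}

/-- The retraction `ρ : H₀M X → H₀M X` onto `H X`. -/
noncomputable def rho {X : Type u} (p : Traj X) : Traj X :=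
  ((if ∀ t, p.2 t ≠ none then p.1 else ⊤),
    fun t =>
      if (t : ℝ≥0∞) ≤ dstar p then p.2 t
      else if ∀ t', p.2 t' ≠ none then p.2 (dstar p).toNNReal else none)

/-- The iterates `f⁽ⁿ⁾` of `f : X → H₀M (Y ⊕ X)`. -/
noncomputable def iter {X Y : Type u} (f : X → Traj (Y ⊕ X)) : ℕ → X → Traj Y
  | 0, _ => (0, fun _ => none)
  | n + 1, x => kl (Sum.elim eta (iter f n)) (f x)

/-- The least-fixpoint iteration `f^‡ x = ⊔ₙ f⁽ⁿ⁾ x`. -/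
noncomputable def iterStar {X Y : Type u} (f : X → Traj (Y ⊕ X)) (x : X) : Traj Y :=
  chainJoin fun n => iter f n x

/-- `f : X → H₊ (A ⊕ B)` is progressive in `B` (guarded in the second summand). -/
def Prog {X : Type u} {A B : Type v} (f : X → Traj (A ⊕ B)) : Prop :=
  ∀ x, ∃ a : A, (f x).2 0 = some (Sum.inl a)

theorem dstar_total {X : Type u} (p : Traj X) (h : ∀ t, p.2 t ≠ none) : dstar p = p.1 := by
  have : {s : ℝ≥0∞ | s < p.1 ∧ ∀ t : ℝ≥0, (t : ℝ≥0∞) < s → p.2 t ≠ none} = Set.Iio p.1 := by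
    ext s
    exact ⟨fun hs => hs.1, fun hs => ⟨hs, fun t _ => h t⟩⟩
  unfold dstar
  rw [this]
  apply le_antisymm
  · exact sSup_le fun s hs => le_of_lt hs
  · exact le_of_forall_lt fun c hc => by
      obtain ⟨b, h1, h2⟩ := exists_between hc
      exact lt_of_lt_of_le h1 (le_sSup h2)

theorem rho_total {X : Type u} (p : Traj X) (hf : Flat p) (h : ∀ t, p.2 t ≠ none) :
    rho p = p := by
  apply Prod.ext
  · exact if_pos h
  · funext t
    change (if (t : ℝ≥0∞) ≤ dstar p then p.2 t
      else if ∀ t', p.2 t' ≠ none then p.2 (dstar p).toNNReal else none) = p.2 t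
    rw [if_pos h, dstar_total p h]
    split_ifs with h1
    · rfl
    · exact (hf t (le_of_lt (not_le.mp h1))).symm

/-- `ρ` is a well-defined retraction onto `H`: it maps `H₀M X` into `H X`, and is the
identity on `H X`. -/
theorem rho_retraction (X : Type u) :
    (∀ p : Traj X, Flat p → Flat (rho p) ∧ memH (rho p)) ∧
    (∀ p : Traj X, Flat p → memH p → rho p = p) := by
  refine ⟨fun p hf => ?_, fun p hf hm => ?_⟩
  · by_cases h : ∀ t, p.2 t ≠ none
    · rw [rho_total p hf h]
      exact ⟨hf, Or.inl h⟩
    · have hd : (rho p).1 = ⊤ := if_neg h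
      refine ⟨fun t ht => ?_, Or.inr ⟨hd, fun s t hst ht => ?_⟩⟩
      · rw [hd] at ht
        exact absurd ht (not_le.mpr ENNReal.coe_lt_top)
      · change (if (t : ℝ≥0∞) ≤ dstar p then p.2 t
          else if ∀ t', p.2 t' ≠ none then p.2 (dstar p).toNNReal else none) ≠ none at ht
        change (if (s : ℝ≥0∞) ≤ dstar p then p.2 s
          else if ∀ t', p.2 t' ≠ none then p.2 (dstar p).toNNReal else none) ≠ none
        rw [if_neg h] at ht ⊢
        by_cases h1 : (t : ℝ≥0∞) ≤ dstar p
        · have hs : (s : ℝ≥0∞) ≤ dstar p := le_trans (ENNReal.coe_le_coe.mpr hst) h1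
          rw [if_pos h1] at ht
          rw [if_pos hs]
          rcases hst.eq_or_lt with rfl | hlt
          · exact ht
          · have h2 : (s : ℝ≥0∞) < dstar p :=
              lt_of_lt_of_le (ENNReal.coe_lt_coe.mpr hlt) h1
            obtain ⟨b, hb, hsb⟩ := lt_sSup_iff.mp h2
            exact hb.2 s hsb
        · rw [if_neg h1] at ht
          exact absurd rfl ht
  · by_cases h : ∀ t, p.2 t ≠ none
    · exact rho_total p hf h
    · obtain ⟨hd, hc⟩ := hm.resolve_left h
      apply Prod.ext
      · rw [hd]
        exact if_neg h
      · funext t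
        change (if (t : ℝ≥0∞) ≤ dstar p then p.2 t
          else if ∀ t', p.2 t' ≠ none then p.2 (dstar p).toNNReal else none) = p.2 t
        rw [if_neg h]
        split_ifs with h1
        · rfl
        · by_contra hne
          apply h1
          refine le_sSup ⟨?_, fun s hs => ?_⟩
          · rw [hd]
            exact ENNReal.coe_lt_top
          · exact hc s t (le_of_lt (ENNReal.coe_lt_coe.mp hs)) (Ne.symm hne)
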